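/- Let 1 ≤ p < 2. Let I ⊂ ℝ be an interval of length |I| < 2π, and let φ be a real-valued function on I that is nonlinear on I (not of the form at+b on all of I) and belongs to C^{1,ω}(I). Then there exists c > 0 such that for all real λ with |λ| ≥ 1, ‖e^{iλφ}‖_{A_p(𝕋,I)} ≥ c · |λ|^{1/p} · χ^{-1}(1/|λ|); equivalently, every function F ∈ A_p(𝕋) whose restriction to I equals e^{iλφ} satisfies ‖F‖_{A_p(𝕋)} ≥ c · |λ|^{1/p} · χ^{-1}(1/|λ|). -/

import Mathlib

open MeasureTheory Real Set
open scoped ENNReal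

/-- The k-th Fourier coefficient of a (2π-periodic) function on the circle,
identified with a function on [0, 2π]. -/
noncomputable def fourierCoef (f : ℝ → ℂ) (k : ℤ) : ℂ :=
  (1 / (2 * (Real.pi : ℂ))) *
    ∫ t in (0:ℝ)..(2 * Real.pi), f t * Complex.exp (-Complex.I * (k : ℂ) * (t : ℂ))

/-- The A_p(𝕋) norm: ℓ^p norm of the sequence of Fourier coefficients
(valued in ℝ≥0∞ so that divergence gives ∞). -/
noncomputable def ApNorm (p : ℝ) (f : ℝ → ℂ) : ℝ≥0∞ :=
  (∑' k : ℤ, ((‖fourierCoef f k‖₊ : ℝ≥0∞) ^ p)) ^ (1 / p)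

/-!
Multiplying `f` by a triangular bump of half-width `w` convolves its Fourier coefficients with a
nonnegative sequence of sum `1`. Translating the bump multiplies that sequence by unimodular
factors, so by Young's inequality the `ℓᵖ` norm does not grow, even if the translate is chosen
separately for each frequency `k`.

By Darboux, `lam * φ'` takes all the values between its values at two points where `φ'` differs,
hence comes within `1` of at least `c * |lam|` integers `k`. For each of them, on a window of
half-width `w` comparable to `χ⁻¹(1 / |lam|)` around such a point, `lam * φ t - k * t` varies by at
most `1`, because `|lam| * w * ω w ≲ 1`. The coefficient at `k` of `f` times the bump on that
window is then at least a constant times `w`, and summing the `p`-th powers over these `k` gives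
`|lam| ^ (1 / p) * w`.
-/

open AddCircle

section Young

variable {p : ℝ}

lemma rpow_tsum_mul_le (hp : 1 ≤ p) {ι : Type*} (a f : ι → ℝ≥0∞) :
    (∑' i, a i * f i) ^ p ≤ (∑' i, a i) ^ (p - 1) * ∑' i, a i * f i ^ p := by
  have hp0 : 0 < p := one_pos.trans_le hp
  have holder : ∑' i, a i * f i ≤ (∑' i, a i) ^ (1 - p⁻¹) * (∑' i, a i * f i ^ p) ^ p⁻¹ := by
    have : 0 ≤ 1 - p⁻¹ := sub_nonneg.2 (inv_le_one_of_one_le₀ hp)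
    rw [ENNReal.tsum_eq_iSup_sum]
    refine iSup_le fun s ↦ (ENNReal.inner_le_weight_mul_Lp_of_nonneg s hp a f).trans ?_
    gcongr <;> exact ENNReal.sum_le_tsum s
  calc (∑' i, a i * f i) ^ p
      ≤ ((∑' i, a i) ^ (1 - p⁻¹) * (∑' i, a i * f i ^ p) ^ p⁻¹) ^ p := by gcongr
    _ = (∑' i, a i) ^ (p - 1) * ∑' i, a i * f i ^ p := by
        rw [ENNReal.mul_rpow_of_nonneg _ _ hp0.le, ← ENNReal.rpow_mul, ← ENNReal.rpow_mul,
          inv_mul_cancel₀ hp0.ne', ENNReal.rpow_one, sub_mul, one_mul, inv_mul_cancel₀ hp0.ne']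

lemma tsum_rpow_tsum_mul_sub_le (hp : 1 ≤ p) {G : Type*} [AddGroup G]
    (a f : G → ℝ≥0∞) :
    ∑' x, (∑' y, a y * f (x - y)) ^ p ≤ (∑' y, a y) ^ p * ∑' x, f x ^ p := by
  calc ∑' x, (∑' y, a y * f (x - y)) ^ p
      ≤ ∑' x, (∑' y, a y) ^ (p - 1) * ∑' y, a y * f (x - y) ^ p :=
        ENNReal.tsum_le_tsum fun x ↦ rpow_tsum_mul_le hp a fun y ↦ f (x - y)
    _ = (∑' y, a y) ^ (p - 1) * ∑' y, a y * ∑' x, f (x - y) ^ p := by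
        rw [ENNReal.tsum_mul_left, ENNReal.tsum_comm]
        simp only [ENNReal.tsum_mul_left]
    _ = (∑' y, a y) ^ (p - 1) * ((∑' y, a y) * ∑' x, f x ^ p) := by
        simp only [(Equiv.subRight _).tsum_eq (fun x ↦ f x ^ p), ← Equiv.subRight_apply,
          ENNReal.tsum_mul_right]
    _ = (∑' y, a y) ^ p * ∑' x, f x ^ p := by
        nth_rw 2 [← ENNReal.rpow_one (∑' y, a y)]
        rw [← mul_assoc, ← ENNReal.rpow_add_of_nonneg _ _ (sub_nonneg.2 hp) zero_le_one,
          sub_add_cancel]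

end Young

section FourierCoeff

variable {T : ℝ} [Fact (0 < T)] {f g : AddCircle T → ℂ}

lemma hasSum_fourierCoeff_mul (hf : Integrable f haarAddCircle) (hgc : Continuous g)
    (hg : Summable (fourierCoeff g)) (k : ℤ) :
    HasSum (fun m ↦ fourierCoeff g m * fourierCoeff f (k - m))
      (fourierCoeff (fun x ↦ f x * g x) k) := by
  have hterm (m : ℤ) (x : AddCircle T) : fourier (-k) x * (f x * (fourierCoeff g m * fourier m x))
      = fourierCoeff g m * (fourier (-(k - m)) x • f x) := by
    rw [show -(k - m) = -k + m by ring, fourier_add, smul_eq_mul]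
    ring
  have hint (m : ℤ) := (hf.fourier_smul (n := -(k - m))).const_mul (fourierCoeff g m)
  have hsum : Summable fun m ↦ ∫ x, ‖fourierCoeff g m * (fourier (-(k - m)) x • f x)‖
      ∂haarAddCircle := by
    simp only [norm_mul, norm_smul, integral_const_mul, fourier_apply, Circle.norm_coe, one_mul]
    exact hg.norm.mul_right _
  convert! hasSum_integral_of_summable_integral_norm hint hsum using 1
  · simp only [integral_const_mul, fourierCoeff]
  · refine integral_congr_ae (.of_forall fun x ↦ ?_)
    have hgx := has_pointwise_sum_fourier_series_of_summable (f := ⟨g, hgc⟩) hg x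
    simp only [ContinuousMap.coe_mk, smul_eq_mul] at hgx
    change fourier (-k) x * (f x * g x) =
      ∑' m, fourierCoeff g m * (fourier (-(k - m)) x • f x)
    rw [tsum_congr fun m ↦ (hterm m x).symm, tsum_mul_left, tsum_mul_left, hgx.tsum_eq]

lemma fourierCoeff_comp_sub_right (g : AddCircle T → ℂ) (y : AddCircle T) (n : ℤ) :
    fourierCoeff (fun x ↦ g (x - y)) n = fourier (-n) y * fourierCoeff g n := by
  have hchar (x : AddCircle T) : fourier (-n) x = fourier (-n) y * fourier (-n) (x - y) := by
    simp only [fourier_apply, ← Circle.coe_mul, ← toCircle_add, ← smul_add, add_sub_cancel]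
  simp only [fourierCoeff, smul_eq_mul]
  calc ∫ x, fourier (-n) x * g (x - y) ∂haarAddCircle
      = ∫ x, fourier (-n) y * (fourier (-n) (x - y) * g (x - y)) ∂haarAddCircle := by
        simp only [← mul_assoc, ← hchar]
    _ = fourier (-n) y * ∫ x, fourier (-n) x * g x ∂haarAddCircle := by
        rw [integral_const_mul, integral_sub_right_eq_self (fun x ↦ fourier (-n) x * g x) y]

lemma enorm_fourierCoeff_comp_sub_right (g : AddCircle T → ℂ) (y : AddCircle T) (n : ℤ) :
    ‖fourierCoeff (fun x ↦ g (x - y)) n‖ₑ = ‖fourierCoeff g n‖ₑ := by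
  rw [fourierCoeff_comp_sub_right, enorm_mul, fourier_apply, ← ofReal_norm, Circle.norm_coe,
    ENNReal.ofReal_one, one_mul]

lemma enorm_fourierCoeff_mul_comp_sub_le (hf : Integrable f haarAddCircle) (hgc : Continuous g)
    (hg : Summable (fourierCoeff g)) (k : ℤ) (y : AddCircle T) :
    ‖fourierCoeff (fun x ↦ f x * g (x - y)) k‖ₑ ≤
      ∑' m, ‖fourierCoeff g m‖ₑ * ‖fourierCoeff f (k - m)‖ₑ := by
  have hgy : Summable (fourierCoeff fun x ↦ g (x - y)) := by
    refine .of_norm (hg.norm.congr fun n ↦ ?_)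
    simp only [← toReal_enorm, enorm_fourierCoeff_comp_sub_right]
  have hmul := hasSum_fourierCoeff_mul hf (g := fun x ↦ g (x - y)) (by fun_prop) hgy k
  rw [← hmul.tsum_eq]
  refine enorm_tsum_le_tsum_enorm.trans_eq (tsum_congr fun m ↦ ?_)
  rw [enorm_mul, enorm_fourierCoeff_comp_sub_right]

lemma card_mul_rpow_le_tsum_enorm_fourierCoeff_rpow {p : ℝ} (hp : 1 ≤ p)
    (hf : Integrable f haarAddCircle) (hgc : Continuous g) (hg : Summable (fourierCoeff g))
    {K : Finset ℤ} {β : ℝ≥0∞}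
    (hK : ∀ k ∈ K, ∃ y, β ≤ ‖fourierCoeff (fun x ↦ f x * g (x - y)) k‖ₑ) :
    K.card * β ^ p ≤ (∑' m, ‖fourierCoeff g m‖ₑ) ^ p * ∑' k, ‖fourierCoeff f k‖ₑ ^ p := by
  have hβ (k : ℤ) (hk : k ∈ K) : β ≤ ∑' m, ‖fourierCoeff g m‖ₑ * ‖fourierCoeff f (k - m)‖ₑ := by
    obtain ⟨y, hy⟩ := hK k hk
    exact hy.trans (enorm_fourierCoeff_mul_comp_sub_le hf hgc hg k y)
  calc K.card * β ^ p
      = ∑ _k ∈ K, β ^ p := by rw [Finset.sum_const, nsmul_eq_mul]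
    _ ≤ ∑ k ∈ K, (∑' m, ‖fourierCoeff g m‖ₑ * ‖fourierCoeff f (k - m)‖ₑ) ^ p :=
        Finset.sum_le_sum fun k hk ↦ ENNReal.rpow_le_rpow (hβ k hk) (zero_le_one.trans hp)
    _ ≤ ∑' k, (∑' m, ‖fourierCoeff g m‖ₑ * ‖fourierCoeff f (k - m)‖ₑ) ^ p :=
        ENNReal.sum_le_tsum K
    _ ≤ _ := tsum_rpow_tsum_mul_sub_le hp _ fun k ↦ ‖fourierCoeff f k‖ₑ

end FourierCoeff

section Tent

lemma integral_cos_mul_one_sub_div {w : ℝ} (hw : w ≠ 0) (x : ℝ) :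
    ∫ t in 0..w, cos (x * t) * (1 - t / w) = w / 2 * sinc (x * w / 2) ^ 2 := by
  rcases eq_or_ne x 0 with rfl | hx
  · have hderiv (t : ℝ) : HasDerivAt (fun t ↦ t - t ^ 2 / (2 * w)) (1 - t / w) t := by
      refine ((hasDerivAt_id' t).sub ((hasDerivAt_pow 2 t).div_const (2 * w))).congr_deriv ?_
      norm_num
      field_simp
    simp only [zero_mul, cos_zero, one_mul, zero_div, sinc_zero]
    rw [intervalIntegral.integral_eq_sub_of_hasDerivAt (fun t _ ↦ hderiv t)
      (Continuous.intervalIntegrable (by fun_prop) _ _)]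
    field_simp
    ring
  · have hderiv (t : ℝ) : HasDerivAt
        (fun t ↦ sin (x * t) / x * (1 - t / w) - cos (x * t) / (x ^ 2 * w))
        (cos (x * t) * (1 - t / w)) t := by
      have hsin := ((hasDerivAt_id' t).const_mul x).sin.div_const x
      have hcos := ((hasDerivAt_id' t).const_mul x).cos.div_const (x ^ 2 * w)
      have hlin := ((hasDerivAt_id' t).div_const w).const_sub 1
      refine ((hsin.mul hlin).sub hcos).congr_deriv ?_
      field_simp
      ring
    have hhalf : cos (x * w) = 1 - 2 * sin (x * w / 2) ^ 2 := by
      rw [← cos_two_mul_eq_one_sub]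
      ring_nf
    rw [intervalIntegral.integral_eq_sub_of_hasDerivAt (fun t _ ↦ hderiv t)
      (Continuous.intervalIntegrable (by fun_prop) _ _), sinc_of_ne_zero (by positivity), hhalf]
    simp only [mul_zero, cos_zero, sin_zero]
    field_simp
    ring

lemma summable_sinc_mul_int_sq {c : ℝ} (hc : c ≠ 0) :
    Summable fun n : ℤ ↦ sinc (c * n) ^ 2 := by
  refine .of_norm_bounded_eventually
    ((summable_one_div_int_pow.2 one_lt_two).mul_left (1 / c ^ 2)) ?_
  filter_upwards [Filter.eventually_cofinite_ne 0] with n hn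
  have hn' : (n : ℝ) ≠ 0 := mod_cast hn
  rw [sinc_of_ne_zero (mul_ne_zero hc hn'), div_pow, norm_of_nonneg (by positivity), mul_pow,
    one_div_mul_one_div]
  gcongr
  exact sin_sq_le_one _

lemma integral_neg_self_eq_integral_add {E : Type*} [NormedAddCommGroup E] [NormedSpace ℝ E]
    {f : ℝ → E} {a : ℝ} (hneg : IntervalIntegrable f volume (-a) 0)
    (hpos : IntervalIntegrable f volume 0 a) :
    ∫ x in -a..a, f x = ∫ x in 0..a, (f x + f (-x)) := by
  have hcomp : IntervalIntegrable (fun x ↦ f (-x)) volume 0 a :=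
    (IntervalIntegrable.iff_comp_neg enorm_ne_top).2
      (by simpa only [neg_neg, neg_zero] using hneg.symm)
  rw [intervalIntegral.integral_add hpos hcomp, intervalIntegral.integral_comp_neg, neg_zero,
    add_comm, intervalIntegral.integral_add_adjacent_intervals hneg hpos]

/-- The triangular bump `x ↦ (1 - |x| / w)⁺` on the circle of length `T`, where `|x|` is the
distance from `x` to `0`: a cutoff to arcs of radius `w` whose Fourier coefficients are
nonnegative, so that they sum to its value at `0`. -/
noncomputable def tent {T : ℝ} (w : ℝ) (x : AddCircle T) : ℝ := max 0 (1 - ‖x‖ / w)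

variable {T w : ℝ}

@[fun_prop]
lemma continuous_tent : Continuous (tent w : AddCircle T → ℝ) := by
  unfold tent
  fun_prop

lemma tent_nonneg (x : AddCircle T) : 0 ≤ tent w x := le_max_left _ _

lemma tent_le_one (hw : 0 ≤ w) (x : AddCircle T) : tent w x ≤ 1 :=
  max_le zero_le_one (sub_le_self _ (by positivity))

lemma tent_zero : tent w (0 : AddCircle T) = 1 := by simp [tent]

lemma tent_neg (x : AddCircle T) : tent w (-x) = tent w x := by simp only [tent, norm_neg]

lemma tent_eq_zero (hw : 0 < w) {x : AddCircle T} (hx : w ≤ ‖x‖) : tent w x = 0 :=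
  max_eq_left (sub_nonpos.2 ((one_le_div hw).2 hx))

lemma tent_eq_one_sub_div (hw : 0 < w) {x : AddCircle T} (hx : ‖x‖ ≤ w) :
    tent w x = 1 - ‖x‖ / w :=
  max_eq_right (sub_nonneg.2 ((div_le_one hw).2 hx))

variable [hT : Fact (0 < T)]

lemma norm_coe_eq_abs {t : ℝ} (ht : |t| ≤ T / 2) : ‖(t : AddCircle T)‖ = |t| :=
  (AddCircle.norm_coe_eq_abs_iff T hT.out.ne').2 (by rwa [abs_of_pos hT.out])

lemma integral_mul_tent (hw : 0 < w) (hwT : w ≤ T / 2) {h : ℝ → ℝ} (hh : Continuous h) :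
    ∫ t in 0..T / 2, h t * tent w (t : AddCircle T) = ∫ t in 0..w, h t * (1 - t / w) := by
  have hint (a b : ℝ) :
      IntervalIntegrable (fun t ↦ h t * tent w (t : AddCircle T)) volume a b :=
    (hh.mul (continuous_tent.comp (AddCircle.continuous_mk' T))).intervalIntegrable a b
  have hnorm {t : ℝ} (h0 : 0 ≤ t) (ht : t ≤ T / 2) : ‖(t : AddCircle T)‖ = t := by
    rw [norm_coe_eq_abs (by rwa [abs_of_nonneg h0]), abs_of_nonneg h0]
  have hinner : ∫ t in 0..w, h t * tent w (t : AddCircle T) = ∫ t in 0..w, h t * (1 - t / w) := by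
    refine intervalIntegral.integral_congr fun t ht ↦ ?_
    rw [uIcc_of_le hw.le] at ht
    have ht' := hnorm ht.1 (ht.2.trans hwT)
    simp only [tent_eq_one_sub_div hw (ht'.trans_le ht.2), ht']
  have houter : ∫ t in w..T / 2, h t * tent w (t : AddCircle T) = 0 := by
    refine intervalIntegral.integral_zero_ae (.of_forall fun t ht ↦ ?_)
    rw [uIoc_of_le hwT] at ht
    rw [tent_eq_zero hw (ht.1.le.trans_eq (hnorm (hw.le.trans ht.1.le) ht.2).symm), mul_zero]
  rw [← intervalIntegral.integral_add_adjacent_intervals (hint 0 w) (hint w _), hinner, houter,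
    add_zero]

lemma fourierCoeff_tent (hw : 0 < w) (hwT : w ≤ T / 2) (n : ℤ) :
    fourierCoeff (fun x : AddCircle T ↦ (tent w x : ℂ)) n =
      (w / T * sinc (π * w / T * n) ^ 2 : ℝ) := by
  have hfold (t : ℝ) : fourier (-n) (t : AddCircle T) • (tent w (t : AddCircle T) : ℂ) +
      fourier (-n) ((-t : ℝ) : AddCircle T) • (tent w ((-t : ℝ) : AddCircle T) : ℂ) =
      (2 * (cos (2 * π * n / T * t) * tent w (t : AddCircle T)) : ℝ) := by
    rw [AddCircle.coe_neg, tent_neg, ← AddCircle.coe_neg, fourier_coe_apply, fourier_coe_apply]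
    push_cast
    rw [← mul_assoc, Complex.two_cos, smul_eq_mul, smul_eq_mul, ← add_mul, add_comm]
    ring_nf
  have hcont : Continuous fun t : ℝ ↦
      fourier (-n) (t : AddCircle T) • (tent w (t : AddCircle T) : ℂ) := by
    have := AddCircle.continuous_mk' T
    fun_prop
  rw [fourierCoeff_eq_intervalIntegral _ n (-(T / 2)), show -(T / 2) + T = T / 2 by ring,
    integral_neg_self_eq_integral_add (hcont.intervalIntegrable _ _)
      (hcont.intervalIntegrable _ _)]
  simp only [hfold]
  rw [intervalIntegral.integral_ofReal, intervalIntegral.integral_const_mul,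
    integral_mul_tent hw hwT (by fun_prop), integral_cos_mul_one_sub_div hw.ne', Complex.real_smul,
    ← Complex.ofReal_mul]
  congr 1
  rw [show 2 * π * n / T * w / 2 = π * w / T * n by ring]
  ring

lemma summable_fourierCoeff_tent (hw : 0 < w) (hwT : w ≤ T / 2) :
    Summable (fourierCoeff fun x : AddCircle T ↦ (tent w x : ℂ)) := by
  have hT0 := hT.out
  simp only [funext (fourierCoeff_tent hw hwT), Complex.summable_ofReal]
  exact (summable_sinc_mul_int_sq (by positivity)).mul_left _

lemma tsum_enorm_fourierCoeff_tent (hw : 0 < w) (hwT : w ≤ T / 2) :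
    ∑' n, ‖fourierCoeff (fun x : AddCircle T ↦ (tent w x : ℂ)) n‖ₑ = 1 := by
  have hT0 := hT.out
  have hsum : HasSum (fun n : ℤ ↦ w / T * sinc (π * w / T * n) ^ 2) 1 := by
    have := has_pointwise_sum_fourier_series_of_summable
      (f := ⟨fun x : AddCircle T ↦ (tent w x : ℂ), by fun_prop⟩)
      (summable_fourierCoeff_tent hw hwT) 0
    simpa only [ContinuousMap.coe_mk, fourierCoeff_tent hw hwT, fourier_eval_zero, smul_eq_mul,
      mul_one, tent_zero, Complex.hasSum_ofReal] using this
  have hnonneg (n : ℤ) : 0 ≤ w / T * sinc (π * w / T * n) ^ 2 := by positivity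
  have henorm (n : ℤ) : ‖fourierCoeff (fun x : AddCircle T ↦ (tent w x : ℂ)) n‖ₑ =
      ENNReal.ofReal (w / T * sinc (π * w / T * n) ^ 2) := by
    rw [fourierCoeff_tent hw hwT, ← ofReal_norm, Complex.norm_of_nonneg (hnonneg n)]
  simp only [henorm]
  rw [← ENNReal.ofReal_tsum_of_nonneg hnonneg hsum.summable, hsum.tsum_eq, ENNReal.ofReal_one]

lemma integral_tent (hw : 0 < w) (hwT : w ≤ T / 2) :
    ∫ x : AddCircle T, tent w x ∂haarAddCircle = w / T := by
  have h := fourierCoeff_tent hw hwT 0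
  simp only [fourierCoeff, neg_zero, fourier_zero, one_smul, integral_complex_ofReal, Int.cast_zero,
    mul_zero, sinc_zero, one_pow, mul_one, Complex.ofReal_inj] at h
  exact h

lemma integral_le_norm_integral_of_le_re {α : Type*} [MeasurableSpace α] {μ : Measure α}
    {f : α → ℂ} {g : α → ℝ} (hf : Integrable f μ) (hg : Integrable g μ) {z : ℂ} (hz : ‖z‖ ≤ 1)
    (h : ∀ x, g x ≤ (z * f x).re) : ∫ x, g x ∂μ ≤ ‖∫ x, f x ∂μ‖ := by
  calc ∫ x, g x ∂μ
      ≤ ∫ x, (z * f x).re ∂μ := integral_mono hg (hf.const_mul z).re h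
    _ = (z * ∫ x, f x ∂μ).re := by
        rw [← integral_const_mul]
        exact integral_re (hf.const_mul z)
    _ ≤ ‖z * ∫ x, f x ∂μ‖ := Complex.re_le_norm _
    _ ≤ ‖∫ x, f x ∂μ‖ := by
        rw [norm_mul]
        exact mul_le_of_le_one_left (norm_nonneg _) hz

lemma exists_coe_eq_and_abs_eq_norm (x : AddCircle T) :
    ∃ t : ℝ, (t : AddCircle T) = x ∧ |t| = ‖x‖ := by
  obtain ⟨t, ht, rfl⟩ : x ∈ ((↑) : ℝ → AddCircle T) '' Icc (-(T / 2)) (-(T / 2) + T) := by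
    rw [AddCircle.coe_image_Icc_eq]
    exact mem_univ x
  refine ⟨t, rfl, (norm_coe_eq_abs (abs_le.2 ⟨ht.1, ?_⟩)).symm⟩
  linarith [ht.2]

lemma mul_div_le_norm_fourierCoeff_mul_tent {f : AddCircle T → ℂ}
    (hf : Integrable f haarAddCircle) (hw : 0 < w) (hwT : w ≤ T / 2) {k : ℤ} {τ r : ℝ} {z : ℂ}
    (hz : ‖z‖ ≤ 1)
    (hre : ∀ t ∈ Metric.closedBall τ w, r ≤ (z * (fourier (-k) (t : AddCircle T) * f t)).re) :
    r * (w / T) ≤ ‖fourierCoeff (fun x ↦ f x * (tent w (x - (τ : AddCircle T)) : ℂ)) k‖ := by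
  have htent : ∫ x : AddCircle T, r * tent w (x - (τ : AddCircle T)) ∂haarAddCircle =
      r * (w / T) := by
    rw [integral_const_mul, integral_sub_right_eq_self, integral_tent hw hwT]
  have hprod : Integrable (fun x ↦ f x * (tent w (x - (τ : AddCircle T)) : ℂ)) haarAddCircle :=
    hf.mul_bdd (c := 1) (by fun_prop) (.of_forall fun x ↦ by
      simpa only [Complex.norm_of_nonneg (tent_nonneg _)] using tent_le_one hw.le _)
  rw [← htent]
  refine integral_le_norm_integral_of_le_re (hprod.fourier_smul (-k))
    (Continuous.integrable_of_hasCompactSupport (by fun_prop) (.of_compactSpace _)) hz fun x ↦ ?_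
  obtain ⟨s, hsx, hs⟩ := exists_coe_eq_and_abs_eq_norm (x - (τ : AddCircle T))
  obtain rfl : x = ((s + τ : ℝ) : AddCircle T) := by
    rw [AddCircle.coe_add, hsx, sub_add_cancel]
  rw [smul_eq_mul, ← mul_assoc, ← mul_assoc, Complex.re_mul_ofReal, mul_assoc]
  rcases le_total |s| w with hsw | hsw
  · refine mul_le_mul_of_nonneg_right (hre _ ?_) (tent_nonneg _)
    rwa [mem_closedBall_iff_norm, add_sub_cancel_right]
  · rw [tent_eq_zero hw (hsw.trans_eq hs), mul_zero, mul_zero]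

end Tent

section Phase

lemma abs_sub_sub_mul_le_of_hasDerivWithinAt {ψ ψ' : ℝ → ℝ} {s : Set ℝ} (hs : Convex ℝ s)
    (hψ : ∀ t ∈ s, HasDerivWithinAt ψ (ψ' t) s t) {a M : ℝ} (hM : ∀ t ∈ s, |ψ' t - a| ≤ M)
    {x y : ℝ} (hx : x ∈ s) (hy : y ∈ s) : |ψ y - ψ x - a * (y - x)| ≤ M * |y - x| := by
  have hderiv (t : ℝ) (ht : t ∈ s) : HasDerivWithinAt (fun t ↦ ψ t - a * t) (ψ' t - a) s t := by
    simpa only [mul_one] using (hψ t ht).fun_sub ((hasDerivAt_id' t).const_mul a).hasDerivWithinAt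
  calc |ψ y - ψ x - a * (y - x)| = ‖ψ y - a * y - (ψ x - a * x)‖ := by
        rw [norm_eq_abs]
        ring_nf
    _ ≤ M * |y - x| := hs.norm_image_sub_le_of_norm_hasDerivWithin_le hderiv hM hx hy

lemma exists_lt_deriv_ne_of_not_affine {φ φ' : ℝ → ℝ} {s : Set ℝ} (hs : s.OrdConnected)
    (hφ : ∀ t ∈ s, HasDerivWithinAt φ (φ' t) s t)
    (hnonlin : ¬∃ a b : ℝ, ∀ t ∈ s, φ t = a * t + b) :
    ∃ x ∈ s, ∃ y ∈ s, x < y ∧ φ' x ≠ φ' y := by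
  by_contra! hconst
  refine hnonlin ?_
  obtain rfl | ⟨x, hx⟩ := s.eq_empty_or_nonempty
  · exact ⟨0, 0, fun t ht ↦ ht.elim⟩
  have heq (t : ℝ) (ht : t ∈ s) : φ' t = φ' x := by
    rcases lt_trichotomy t x with h | rfl | h
    exacts [hconst t ht x hx h, rfl, (hconst x hx t ht h).symm]
  refine ⟨φ' x, φ x - φ' x * x, fun t ht ↦ ?_⟩
  have hlin := abs_sub_sub_mul_le_of_hasDerivWithinAt hs.convex hφ (a := φ' x) (M := 0)
    (fun t ht ↦ by rw [heq t ht, sub_self, abs_zero]) hx ht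
  rw [zero_mul, abs_nonpos_iff] at hlin
  linear_combination hlin

lemma exists_mem_closedBall_subset_Icc {u v w t : ℝ} (hw : 0 ≤ w) (hwuv : 2 * w ≤ v - u)
    (ht : t ∈ Icc u v) :
    ∃ τ, t ∈ Metric.closedBall τ w ∧ Metric.closedBall τ w ⊆ Icc u v := by
  simp only [Real.closedBall_eq_Icc]
  refine ⟨max (u + w) (min (v - w) t), ⟨?_, ?_⟩, Icc_subset_Icc ?_ ?_⟩
  all_goals grind

lemma exists_finset_int_abs_sub_le_card (a b : ℝ) :
    ∃ K : Finset ℤ, |a - b| ≤ K.card ∧ ∀ k ∈ K, ∃ x ∈ uIcc a b, |x - k| ≤ 1 := by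
  wlog hab : a ≤ b generalizing a b
  · simpa only [uIcc_comm, abs_sub_comm] using this b a (le_of_not_ge hab)
  refine ⟨Finset.Icc ⌊a⌋ ⌊b⌋, ?_, fun k hk ↦ ?_⟩
  · have hfloor : ⌊a⌋ ≤ ⌊b⌋ := Int.floor_mono hab
    have hcard : ((Finset.Icc ⌊a⌋ ⌊b⌋).card : ℝ) = ⌊b⌋ + 1 - ⌊a⌋ := by
      rw [Int.card_Icc]
      exact_mod_cast Int.toNat_of_nonneg (by lia)
    rw [hcard, abs_sub_comm, abs_of_nonneg (sub_nonneg.2 hab)]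
    linarith [Int.floor_le a, Int.lt_floor_add_one b]
  · obtain ⟨hak, hkb⟩ := Finset.mem_Icc.1 hk
    have hkb' : (k : ℝ) ≤ b := Int.le_floor.1 hkb
    have hak' : a - 1 ≤ k := (Int.sub_one_lt_floor a).le.trans (mod_cast hak)
    refine ⟨max a k, ⟨?_, ?_⟩, ?_⟩
    · rw [inf_eq_left.2 hab]
      exact le_max_left _ _
    · rw [sup_eq_right.2 hab]
      exact max_le hab hkb'
    · rw [abs_of_nonneg (sub_nonneg.2 (le_max_right _ _)), sub_le_iff_le_add]
      exact max_le (by linarith) (by linarith)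

end Phase

section TwoPi

instance fact_two_pi_pos : Fact (0 < 2 * π) := ⟨two_pi_pos⟩

lemma fourier_two_pi_apply (n : ℤ) (t : ℝ) :
    fourier n (t : AddCircle (2 * π)) = Complex.exp (Complex.I * n * t) := by
  rw [fourier_coe_apply]
  congr 1
  push_cast
  field_simp [Complex.ofReal_ne_zero.2 pi_ne_zero]

lemma fourierCoef_coe (f : AddCircle (2 * π) → ℂ) (k : ℤ) :
    fourierCoef (fun t ↦ f t) k = fourierCoeff f k := by
  rw [fourierCoef, fourierCoeff_eq_intervalIntegral f k 0, zero_add, Complex.real_smul]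
  push_cast
  congr 1
  refine intervalIntegral.integral_congr fun t _ ↦ ?_
  simp only [fourier_two_pi_apply, smul_eq_mul, Int.cast_neg, mul_neg, mul_comm]

lemma ApNorm_coe (p : ℝ) (f : AddCircle (2 * π) → ℂ) :
    ApNorm p (fun t ↦ f t) = (∑' k, ‖fourierCoeff f k‖ₑ ^ p) ^ (1 / p) := by
  simp only [ApNorm, fourierCoef_coe, enorm_eq_nnnorm]

lemma integrable_haarAddCircle_of_intervalIntegrable {T : ℝ} [hT : Fact (0 < T)]
    {f : AddCircle T → ℂ} (hf : IntervalIntegrable (fun t : ℝ ↦ f t) volume 0 T) :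
    Integrable f haarAddCircle := by
  have hlift : liftIoc T 0 (fun t : ℝ ↦ f t) = f := by
    ext x
    simp only [liftIoc, Function.comp_apply, domRestrict_apply, coe_equivIoc]
  have hf' : MemLp (fun t : ℝ ↦ f t) 1 (volume.restrict (Ioc 0 (0 + T))) := by
    rw [memLp_one_iff_integrable, ← IntegrableOn,
      ← intervalIntegrable_iff_integrableOn_Ioc_of_le (by simpa using hT.out.le)]
    simpa only [zero_add] using hf
  rw [← memLp_one_iff_integrable, ← hlift]
  exact hf'.memLp_liftIoc.haarAddCircle

lemma div_le_norm_fourierCoeff_mul_tent_of_eq_exp {f : AddCircle (2 * π) → ℂ}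
    (hf : Integrable f haarAddCircle) {w : ℝ} (hw : 0 < w) (hwπ : w ≤ π) {k : ℤ} {ψ : ℝ → ℝ}
    {τ γ : ℝ} (hexp : ∀ t ∈ Metric.closedBall τ w, f t = Complex.exp (Complex.I * ψ t))
    (hγ : ∀ t ∈ Metric.closedBall τ w, |ψ t - k * t - γ| ≤ 1) :
    w / (4 * π) ≤ ‖fourierCoeff (fun x ↦ f x * tent w (x - (τ : AddCircle (2 * π)))) k‖ := by
  have hcos {θ : ℝ} (hθ : |θ| ≤ 1) : 1 / 2 ≤ cos θ := by
    linarith [one_sub_sq_div_two_le_cos (x := θ), (sq_le_one_iff_abs_le_one θ).2 hθ]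
  have hphase (t : ℝ) (ht : t ∈ Metric.closedBall τ w) :
      Complex.exp ((-γ : ℝ) * Complex.I) * (fourier (-k) (t : AddCircle (2 * π)) * f t) =
        Complex.exp ((ψ t - k * t - γ : ℝ) * Complex.I) := by
    rw [hexp t ht, fourier_two_pi_apply, ← Complex.exp_add, ← Complex.exp_add]
    push_cast
    ring_nf
  calc w / (4 * π) = 1 / 2 * (w / (2 * π)) := by ring
    _ ≤ _ := mul_div_le_norm_fourierCoeff_mul_tent hf hw (by linarith)
      (Complex.norm_exp_ofReal_mul_I _).le fun t ht ↦ by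
        rw [hphase t ht, Complex.exp_ofReal_mul_I_re]
        exact hcos (hγ t ht)

lemma exists_div_le_norm_fourierCoeff_mul_tent {f : AddCircle (2 * π) → ℂ}
    (hf : Integrable f haarAddCircle) {ψ ψ' : ℝ → ℝ} {u v w M : ℝ}
    (hψ : ∀ t ∈ Icc u v, HasDerivWithinAt ψ (ψ' t) (Icc u v) t)
    (hexp : ∀ t ∈ Icc u v, f t = Complex.exp (Complex.I * ψ t))
    (hosc : ∀ s ∈ Icc u v, ∀ t ∈ Icc u v, |s - t| ≤ 2 * w → |ψ' s - ψ' t| ≤ M)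
    (hw : 0 < w) (hwuv : 2 * w ≤ v - u) (hwM : (M + 1) * w ≤ 1) {k : ℤ} {t₀ : ℝ}
    (ht₀ : t₀ ∈ Icc u v) (hk : |ψ' t₀ - k| ≤ 1) :
    ∃ τ : ℝ, w / (4 * π) ≤
      ‖fourierCoeff (fun x ↦ f x * tent w (x - (τ : AddCircle (2 * π)))) k‖ := by
  obtain ⟨τ, ht₀τ, hsub⟩ := exists_mem_closedBall_subset_Icc hw.le hwuv ht₀
  have hM : 0 ≤ M := (abs_nonneg _).trans (hosc t₀ ht₀ t₀ ht₀ (by simpa using hw.le))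
  have hslope (t : ℝ) (ht : t ∈ Metric.closedBall τ w) : |ψ' t - k| ≤ M + 1 := by
    have hdist : |t - t₀| ≤ 2 * w := by
      rw [← Real.dist_eq, two_mul]
      exact (dist_triangle_right t t₀ τ).trans (add_le_add ht ht₀τ)
    exact (abs_sub_le _ (ψ' t₀) _).trans (add_le_add (hosc t (hsub ht) t₀ ht₀ hdist) hk)
  refine ⟨τ, div_le_norm_fourierCoeff_mul_tent_of_eq_exp hf hw
    (by nlinarith [pi_gt_three]) (ψ := ψ) (γ := ψ τ - k * τ) (fun t ht ↦ hexp t (hsub ht))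
    fun t ht ↦ ?_⟩
  calc |ψ t - k * t - (ψ τ - k * τ)| = |ψ t - ψ τ - k * (t - τ)| := by ring_nf
    _ ≤ (M + 1) * |t - τ| := abs_sub_sub_mul_le_of_hasDerivWithinAt (convex_closedBall τ w)
        (fun s hs ↦ (hψ s (hsub hs)).mono hsub) hslope (Metric.mem_closedBall_self hw.le) ht
    _ ≤ (M + 1) * w := mul_le_mul_of_nonneg_left (mem_closedBall_iff_norm.1 ht) (by linarith)
    _ ≤ 1 := hwM

theorem ofReal_rpow_mul_le_ApNorm_of_eq_exp {p : ℝ} (hp : 1 ≤ p) {f : AddCircle (2 * π) → ℂ}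
    (hf : Integrable f haarAddCircle) {ψ ψ' : ℝ → ℝ} {u v w M : ℝ}
    (hψ : ∀ t ∈ Icc u v, HasDerivWithinAt ψ (ψ' t) (Icc u v) t)
    (hexp : ∀ t ∈ Icc u v, f t = Complex.exp (Complex.I * ψ t))
    (hosc : ∀ s ∈ Icc u v, ∀ t ∈ Icc u v, |s - t| ≤ 2 * w → |ψ' s - ψ' t| ≤ M)
    (hw : 0 < w) (hwuv : 2 * w ≤ v - u) (hwM : (M + 1) * w ≤ 1) :
    ENNReal.ofReal (|ψ' u - ψ' v| ^ (1 / p) * (w / (4 * π))) ≤ ApNorm p (fun t ↦ f t) := by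
  have huv : u ≤ v := by linarith
  have hu := left_mem_Icc.2 huv
  have hv := right_mem_Icc.2 huv
  have hM : 0 ≤ M := (abs_nonneg _).trans (hosc u hu u hu (by simpa using hw.le))
  have hwπ : w ≤ 2 * π / 2 := by nlinarith [pi_gt_three]
  have hp0 : 0 < p := one_pos.trans_le hp
  obtain ⟨K, hcard, hK⟩ := exists_finset_int_abs_sub_le_card (ψ' u) (ψ' v)
  have hcoeff (k : ℤ) (hk : k ∈ K) : ∃ y : AddCircle (2 * π), ENNReal.ofReal (w / (4 * π)) ≤
      ‖fourierCoeff (fun x ↦ f x * tent w (x - y)) k‖ₑ := by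
    obtain ⟨x, hx, hxk⟩ := hK k hk
    obtain ⟨t₀, ht₀, rfl⟩ := (ordConnected_Icc.image_hasDerivWithinAt hψ).uIcc_subset
      (mem_image_of_mem ψ' hu) (mem_image_of_mem ψ' hv) hx
    obtain ⟨τ, hτ⟩ := exists_div_le_norm_fourierCoeff_mul_tent hf hψ hexp hosc hw hwuv hwM ht₀ hxk
    exact ⟨τ, (ENNReal.ofReal_le_ofReal hτ).trans_eq (ofReal_norm _)⟩
  have hyoung := card_mul_rpow_le_tsum_enorm_fourierCoeff_rpow hp hf
    (g := fun x ↦ (tent w x : ℂ)) (by fun_prop) (summable_fourierCoeff_tent hw hwπ) hcoeff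
  rw [tsum_enorm_fourierCoeff_tent hw hwπ, ENNReal.one_rpow, one_mul] at hyoung
  calc ENNReal.ofReal (|ψ' u - ψ' v| ^ (1 / p) * (w / (4 * π)))
      ≤ ENNReal.ofReal ((K.card : ℝ) ^ (1 / p) * (w / (4 * π))) := by gcongr
    _ = (K.card * ENNReal.ofReal (w / (4 * π)) ^ p) ^ (1 / p) := by
        rw [ENNReal.mul_rpow_of_nonneg _ _ (by positivity), ← ENNReal.rpow_mul,
          mul_one_div_cancel hp0.ne', ENNReal.rpow_one, ENNReal.ofReal_mul (by positivity),
          ← ENNReal.ofReal_rpow_of_nonneg (by positivity) (by positivity), ENNReal.ofReal_natCast]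
    _ ≤ ApNorm p (fun t ↦ f t) := by
        rw [ApNorm_coe]
        gcongr

end TwoPi

section Modulus

variable {ω : ℝ → ℝ}

lemma le_of_mul_le_mul_of_monotoneOn (hω : MonotoneOn ω (Ici 0)) {δ δ₁ : ℝ} (hδ₁ : 0 ≤ δ₁)
    (hpos : 0 < δ₁ * ω δ₁) (h : δ * ω δ ≤ δ₁ * ω δ₁) : δ ≤ δ₁ := by
  by_contra! hlt
  have hω₁ : 0 < ω δ₁ := pos_of_mul_pos_right hpos hδ₁
  have hle : ω δ₁ ≤ ω δ := hω hδ₁ (hδ₁.trans hlt.le) hlt.le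
  exact h.not_gt (mul_lt_mul hlt hle hω₁ (hδ₁.trans hlt.le))

lemma ofReal_le_ApNorm_of_eq_exp_mul {p : ℝ} (hp : 1 ≤ p) {f : AddCircle (2 * π) → ℂ}
    (hf : Integrable f haarAddCircle) (hω : MonotoneOn ω (Ici 0)) {φ φ' : ℝ → ℝ} {u v C : ℝ}
    (hφ : ∀ t ∈ Icc u v, HasDerivWithinAt φ (φ' t) (Icc u v) t) (hC : 0 ≤ C)
    (hlip : ∀ s ∈ Icc u v, ∀ t ∈ Icc u v, |φ' s - φ' t| ≤ C * ω |s - t|) {lam δ ε : ℝ}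
    (hexp : ∀ t ∈ Icc u v, f t = Complex.exp (Complex.I * lam * φ t)) (hδ : 0 < δ)
    (hχ : δ * ω δ = 1 / |lam|) (hlam : lam ≠ 0) (hε : 0 < ε) (hε₂ : 2 * ε ≤ 1)
    (hεuv : 2 * (ε * δ) ≤ v - u) (hεC : ε * (C + δ) ≤ 1) :
    ENNReal.ofReal (|φ' u - φ' v| ^ (1 / p) * (ε / (4 * π)) * |lam| ^ (1 / p) * δ) ≤
      ApNorm p (fun t ↦ f t) := by
  have hosc (s : ℝ) (hs : s ∈ Icc u v) (t : ℝ) (ht : t ∈ Icc u v) (hst : |s - t| ≤ 2 * (ε * δ)) :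
      |lam * φ' s - lam * φ' t| ≤ |lam| * (C * ω δ) := by
    have hωst : ω |s - t| ≤ ω δ := hω (mem_Ici.2 (abs_nonneg _)) hδ.le (hst.trans (by nlinarith))
    rw [← mul_sub, abs_mul]
    gcongr
    exact (hlip s hs t ht).trans (by gcongr)
  have hwM : (|lam| * (C * ω δ) + 1) * (ε * δ) ≤ 1 := by
    calc (|lam| * (C * ω δ) + 1) * (ε * δ) = ε * (C * (|lam| * (δ * ω δ)) + δ) := by ring
      _ = ε * (C + δ) := by rw [hχ, mul_one_div_cancel (abs_ne_zero.2 hlam), mul_one]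
      _ ≤ 1 := hεC
  calc ENNReal.ofReal (|φ' u - φ' v| ^ (1 / p) * (ε / (4 * π)) * |lam| ^ (1 / p) * δ)
      = ENNReal.ofReal (|lam * φ' u - lam * φ' v| ^ (1 / p) * (ε * δ / (4 * π))) := by
        rw [← mul_sub, abs_mul, mul_rpow (abs_nonneg _) (abs_nonneg _)]
        ring_nf
    _ ≤ ApNorm p (fun t ↦ f t) := ofReal_rpow_mul_le_ApNorm_of_eq_exp hp hf
        (ψ := fun t ↦ lam * φ t)
        (ψ' := fun t ↦ lam * φ' t) (fun t ht ↦ (hφ t ht).const_mul lam)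
        (fun t ht ↦ by rw [hexp t ht, Complex.ofReal_mul, mul_assoc]) hosc (by positivity) hεuv hwM

end Modulus

theorem statement1_general (p : ℝ) (hp1 : 1 ≤ p) (ω : ℝ → ℝ) (hω_mono : MonotoneOn ω (Ici 0))
    (χinv : ℝ → ℝ) (hχinv : ∀ y : ℝ, 0 < y → 0 ≤ χinv y ∧ χinv y * ω (χinv y) = y)
    (I : Set ℝ) (hI : I.OrdConnected) (φ φ' : ℝ → ℝ)
    (hφ_deriv : ∀ t ∈ I, HasDerivWithinAt φ (φ' t) I t)
    (hφ_lip : ∃ C : ℝ, 0 < C ∧ ∀ s ∈ I, ∀ t ∈ I, |φ' s - φ' t| ≤ C * ω |s - t|)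
    (hφ_nonlinear : ¬ ∃ a b : ℝ, ∀ t ∈ I, φ t = a * t + b) :
    ∃ c : ℝ, 0 < c ∧ ∀ lam : ℝ, 1 ≤ |lam| →
      ∀ F : ℝ → ℂ, Function.Periodic F (2 * π) → IntervalIntegrable F volume 0 (2 * π) →
        (∀ t ∈ I, F t = Complex.exp (Complex.I * lam * φ t)) →
        ENNReal.ofReal (c * |lam| ^ (1 / p) * χinv (1 / |lam|)) ≤ ApNorm p F := by
  obtain ⟨C, hC, hlip⟩ := hφ_lip
  obtain ⟨u, hu, v, hv, huv, hne⟩ := exists_lt_deriv_ne_of_not_affine hI hφ_deriv hφ_nonlinear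
  have hsub : Icc u v ⊆ I := hI.out hu hv
  have hχinv_pos (y : ℝ) (hy : 0 < y) : 0 < χinv y :=
    (hχinv y hy).1.lt_of_ne' (left_ne_zero_of_mul ((hχinv y hy).2.trans_ne hy.ne'))
  have hδ₁ := hχinv_pos 1 one_pos
  have hχ₁ := (hχinv 1 one_pos).2
  set δ₁ := χinv 1
  obtain ⟨ε, hε, hε₂, hεuv, hεC⟩ :
      ∃ ε : ℝ, 0 < ε ∧ 2 * ε ≤ 1 ∧ 2 * (ε * δ₁) ≤ v - u ∧ ε * (C + δ₁) ≤ 1 := by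
    refine ⟨min (1 / 2) (min ((v - u) / (2 * δ₁)) (1 / (C + δ₁))), lt_min one_half_pos
      (lt_min (div_pos (sub_pos.2 huv) (by positivity)) (by positivity)), ?_, ?_, ?_⟩
    · linarith [min_le_left (1 / 2) (min ((v - u) / (2 * δ₁)) (1 / (C + δ₁)))]
    · rw [mul_left_comm, ← le_div_iff₀ (by positivity)]
      exact (min_le_right _ _).trans (min_le_left _ _)
    · rw [← le_div_iff₀ (by positivity)]
      exact (min_le_right _ _).trans (min_le_right _ _)
  have hslope : 0 < |φ' u - φ' v| ^ (1 / p) := rpow_pos_of_pos (abs_pos.2 (sub_ne_zero.2 hne)) _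
  refine ⟨|φ' u - φ' v| ^ (1 / p) * (ε / (4 * π)), mul_pos hslope (by positivity),
    fun lam hlam F hF hFint hexp ↦ ?_⟩
  obtain ⟨f, rfl⟩ : ∃ f : AddCircle (2 * π) → ℂ, F = fun t : ℝ ↦ f t :=
    ⟨hF.lift, funext fun t ↦ (hF.lift_coe t).symm⟩
  have hlam0 : 0 < |lam| := one_pos.trans_le hlam
  have hlam_inv : 0 < 1 / |lam| := by positivity
  have hδ := hχinv_pos _ hlam_inv
  have hχ := (hχinv _ hlam_inv).2
  have hδδ₁ : χinv (1 / |lam|) ≤ δ₁ := le_of_mul_le_mul_of_monotoneOn hω_mono hδ₁.le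
    (hχ₁ ▸ one_pos) (by rwa [hχ, hχ₁, div_le_one hlam0])
  exact ofReal_le_ApNorm_of_eq_exp_mul hp1 (integrable_haarAddCircle_of_intervalIntegrable hFint)
    hω_mono (fun t ht ↦ (hφ_deriv t (hsub ht)).mono hsub) hC.le
    (fun s hs t ht ↦ hlip s (hsub hs) t (hsub ht)) (fun t ht ↦ hexp t (hsub ht)) hδ hχ
    (abs_pos.1 hlam0) hε hε₂ (le_trans (by gcongr) hεuv) (le_trans (by gcongr) hεC)

/-- Theorem 1′, local version: if φ ∈ C^{1,ω}(I) is nonlinear on an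
interval I = [u,v] of length < 2π, then every F ∈ A_p(𝕋) (2π-periodic, integrable)
restricting to e^{iλφ} on I has A_p norm ≥ c·|λ|^{1/p}·χ^{-1}(1/|λ|). -/
theorem statement1
    (p : ℝ) (hp1 : 1 ≤ p) (hp2 : p < 2)
    -- ω is a modulus of continuity: continuous non-decreasing on [0,∞), ω(0)=0, ω(δ)>0 for δ>0,
    -- with χ(δ) = δ·ω(δ) strictly increasing and unbounded, and χinv its inverse.
    (ω : ℝ → ℝ)
    (hω_cont : ContinuousOn ω (Ici 0)) (hω_mono : MonotoneOn ω (Ici 0))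
    (hω_zero : ω 0 = 0) (hω_pos : ∀ δ : ℝ, 0 < δ → 0 < ω δ)
    (hχ_mono : StrictMonoOn (fun δ => δ * ω δ) (Ici 0))
    (hχ_unbdd : ∀ y : ℝ, ∃ δ : ℝ, 0 ≤ δ ∧ y < δ * ω δ)
    (χinv : ℝ → ℝ)
    (hχinv_left : ∀ δ : ℝ, 0 ≤ δ → χinv (δ * ω δ) = δ)
    (hχinv_right : ∀ y : ℝ, 0 ≤ y → 0 ≤ χinv y ∧ χinv y * ω (χinv y) = y)
    (u v : ℝ) (huv : u < v) (hlen : v - u < 2 * Real.pi)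
    (φ : ℝ → ℝ) (φ' : ℝ → ℝ)
    (hφ_deriv : ∀ t ∈ Icc u v, HasDerivWithinAt φ (φ' t) (Icc u v) t)
    (hφ'_cont : ContinuousOn φ' (Icc u v))
    (hφ_lip : ∃ C : ℝ, 0 < C ∧ ∀ s ∈ Icc u v, ∀ t ∈ Icc u v, |φ' s - φ' t| ≤ C * ω |s - t|)
    (hφ_nonlinear : ¬ ∃ a b : ℝ, ∀ t ∈ Icc u v, φ t = a * t + b) :
    ∃ c : ℝ, 0 < c ∧ ∀ lam : ℝ, 1 ≤ |lam| →
      ∀ F : ℝ → ℂ, Function.Periodic F (2 * Real.pi) →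
        IntervalIntegrable F volume 0 (2 * Real.pi) →
        (∀ t ∈ Icc u v, F t = Complex.exp (Complex.I * (lam : ℂ) * (φ t : ℂ))) →
        ENNReal.ofReal (c * |lam| ^ (1 / p) * χinv (1 / |lam|)) ≤ ApNorm p F := by
  exact statement1_general p hp1 ω hω_mono χinv (fun y hy ↦ hχinv_right y hy.le) (Icc u v)
    ordConnected_Icc φ φ' hφ_deriv hφ_lip hφ_nonlinear
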